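/- Shallow splitting for LBV: if the structure [(R,T),P] is provable in LBV, then there exist structures P₁ and P₂ such that there is a derivation in LBV with premise [P₁,P₂] and conclusion P, and both [R,P₁] and [T,P₂] are provable in LBV. -/

import Mathlib

/-!
The deep-inference system LBV (the `BV`-free core system of the calculus of
structures of Guglielmi).  Structures are built from the unit `◦`, atoms `a`
and negated atoms `ā` by par `[P,Q]` and copar `(P,Q)`, and are identified
modulo the congruence generated by associativity, commutativity and the
unit laws `[P,◦]=P`, `(P,◦)=P`.  The rules `ai↓`, `s` (and the atomic cut
`ai↑`) apply inside an arbitrary one-hole context and modulo the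
equivalence.
-/

namespace LBV

/-- Structures: the unit `◦`, atoms, negated atoms, par `[P,Q]` and
copar `(P,Q)`. -/
inductive St : Type where
  | unit : St
  | pos  : ℕ → St
  | neg  : ℕ → St
  | par  : St → St → St
  | cop  : St → St → St
deriving DecidableEq

/-- Negation: `¬◦ = ◦`, `¬[P,Q] = (¬P,¬Q)`, `¬(P,Q) = [¬P,¬Q]`, `¬¬P = P`. -/
def St.negS : St → St
  | .unit => .unit
  | .pos a => .neg a
  | .neg a => .pos a
  | .par P Q => .cop P.negS Q.negS
  | .cop P Q => .par P.negS Q.negS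

/-- Atoms are the propositional symbols and their negations. -/
def St.isAtom : St → Prop
  | .pos _ => True
  | .neg _ => True
  | _ => False

/-- Syntactic equivalence of structures: the smallest congruence generated
by associativity and commutativity of par and copar and the unit laws
`[P,◦]=P` and `(P,◦)=P`. -/
inductive Equiv : St → St → Prop where
  | refl (P : St) : Equiv P P
  | symm {P Q : St} : Equiv P Q → Equiv Q P
  | trans {P Q R : St} : Equiv P Q → Equiv Q R → Equiv P R
  | parComm (P Q : St) : Equiv (.par P Q) (.par Q P)
  | copComm (P Q : St) : Equiv (.cop P Q) (.cop Q P)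
  | parAssoc (P Q R : St) : Equiv (.par (.par P Q) R) (.par P (.par Q R))
  | copAssoc (P Q R : St) : Equiv (.cop (.cop P Q) R) (.cop P (.cop Q R))
  | parUnit (P : St) : Equiv (.par P .unit) P
  | copUnit (P : St) : Equiv (.cop P .unit) P
  | parCongr {P P' Q Q' : St} :
      Equiv P P' → Equiv Q Q' → Equiv (.par P Q) (.par P' Q')
  | copCongr {P P' Q Q' : St} :
      Equiv P P' → Equiv Q Q' → Equiv (.cop P Q) (.cop P' Q')

/-- One-hole contexts. -/
inductive Ctx : Type where
  | hole : Ctx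
  | parL : Ctx → St → Ctx
  | parR : St → Ctx → Ctx
  | copL : Ctx → St → Ctx
  | copR : St → Ctx → Ctx

/-- Plugging a structure into the hole of a context. -/
def Ctx.fill : Ctx → St → St
  | .hole, P => P
  | .parL C Q, P => .par (C.fill P) Q
  | .parR Q C, P => .par Q (C.fill P)
  | .copL C Q, P => .cop (C.fill P) Q
  | .copR Q C, P => .cop Q (C.fill P)

/-- Names of the rules: interaction `ai↓`, co-interaction (atomic cut)
`ai↑`, and switch `s`. -/
inductive Rule : Type where
  | aiDown | aiUp | s
deriving DecidableEq

/-- The rules read at the root of a structure (premise on the left,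
conclusion on the right). -/
inductive RootStep : Rule → St → St → Prop where
  | aiDown (A : St) (h : A.isAtom) : RootStep .aiDown .unit (.par A A.negS)
  | aiUp (A : St) (h : A.isAtom) : RootStep .aiUp (.cop A A.negS) .unit
  | s (P Q R : St) : RootStep .s (.cop P (.par Q R)) (.par (.cop P Q) R)

/-- One inference step using a rule from the set `Rs`, applied inside an
arbitrary context and modulo the equivalence. -/
def Step (Rs : Set Rule) (P Q : St) : Prop :=
  ∃ r ∈ Rs, ∃ (C : Ctx) (P' Q' : St),
    RootStep r P' Q' ∧ Equiv P (C.fill P') ∧ Equiv (C.fill Q') Q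

/-- Derivations over an arbitrary step relation: a finite sequence of rule
instances from the premise to the conclusion (modulo the equivalence). -/
inductive Deriv (Stp : St → St → Prop) : St → St → Prop where
  | eqv {P Q : St} : Equiv P Q → Deriv Stp P Q
  | step {P Q R : St} : Stp P Q → Deriv Stp Q R → Deriv Stp P R

/-- The rules of the system LBV. -/
def LBVRules : Set Rule := {.aiDown, .s}

/-- Derivations in LBV. -/
def DerivLBV (P Q : St) : Prop := Deriv (Step LBVRules) P Q

/-- A proof of `Q` in LBV is a derivation from the unit `◦` to `Q`. -/
def ProofLBV (Q : St) : Prop := DerivLBV .unit Q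

end LBV

namespace LBV

/-!
LBV is matched with a cut-free one-sided sequent calculus on multisets of structures: multiplicative
linear logic with mix and a self-dual unit, whose sequents read as the par of their members.

If a sequent `F, Γ` is derivable, follow `F` upwards to the rule introducing it: what stands beside
`F` there leads down to `Γ` by the remaining rules, in which `F` is a mere bystander. So `F` may be
replaced throughout by whatever may replace it at its introduction. This is all it takes to see that
the equivalence and the two rules of LBV, in any context, preserve derivability, whence every
provable structure is derivable.

For `F = (R,T)` the introducing rule has premises `R, Γ₁` and `T, Γ₂`, and the rules leading down
from `Γ₁, Γ₂` to `P` are derivations in LBV. The pars of `Γ₁` and `Γ₂` are the required `P₁` and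
`P₂`.
-/

open Relation

/-- Cut-free derivability of a sequent in multiplicative linear logic with mix, the self-dual unit
`◦` standing for both multiplicative units. Sequents are multisets, so exchange is implicit. -/
inductive SeqProof : Multiset St → Prop where
  | nil : SeqProof 0
  | unit : SeqProof {.unit}
  | ax (a : ℕ) : SeqProof {.pos a, .neg a}
  | mix {Γ Δ : Multiset St} : SeqProof Γ → SeqProof Δ → SeqProof (Γ + Δ)
  | par {A B : St} {Γ : Multiset St} : SeqProof (A ::ₘ B ::ₘ Γ) → SeqProof (.par A B ::ₘ Γ)
  | cop {A B : St} {Γ Δ : Multiset St} :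
      SeqProof (A ::ₘ Γ) → SeqProof (B ::ₘ Δ) → SeqProof (.cop A B ::ₘ (Γ + Δ))

/-- One rule of the sequent calculus leads from the premise `Γ` to the conclusion `Δ`, any other
premise being derivable. The premise `Γ` itself need not be derivable. -/
inductive SeqStep : Multiset St → Multiset St → Prop where
  | mix {Γ Δ : Multiset St} : SeqProof Δ → SeqStep Γ (Γ + Δ)
  | par {A B : St} {Γ : Multiset St} : SeqStep (A ::ₘ B ::ₘ Γ) (.par A B ::ₘ Γ)
  | copL {A B : St} {Γ Δ : Multiset St} :
      SeqProof (B ::ₘ Δ) → SeqStep (A ::ₘ Γ) (.cop A B ::ₘ (Γ + Δ))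
  | copR {A B : St} {Γ Δ : Multiset St} :
      SeqProof (A ::ₘ Γ) → SeqStep (B ::ₘ Δ) (.cop A B ::ₘ (Γ + Δ))

/-- `Principal F Γ` says that the sequent `F ::ₘ Γ` is derivable by a last rule in which `F` is
principal, that is, which introduces this occurrence of `F`. -/
inductive Principal : St → Multiset St → Prop where
  | unit : Principal .unit 0
  | pos (a : ℕ) : Principal (.pos a) {.neg a}
  | neg (a : ℕ) : Principal (.neg a) {.pos a}
  | par {A B : St} {Γ : Multiset St} : SeqProof (A ::ₘ B ::ₘ Γ) → Principal (.par A B) Γ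
  | cop {A B : St} {Γ Δ : Multiset St} :
      SeqProof (A ::ₘ Γ) → SeqProof (B ::ₘ Δ) → Principal (.cop A B) (Γ + Δ)

theorem cons_eq_add_iff {α : Type*} {a : α} {s t u : Multiset α} :
    a ::ₘ s = t + u ↔ (∃ v, t = a ::ₘ v ∧ s = v + u) ∨ ∃ v, u = a ::ₘ v ∧ s = t + v := by
  constructor
  · intro h
    have ha : a ∈ t + u := h ▸ Multiset.mem_cons_self a s
    rcases Multiset.mem_add.1 ha with ht | hu
    · obtain ⟨v, rfl⟩ := Multiset.exists_cons_of_mem ht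
      exact .inl ⟨v, rfl, by rwa [Multiset.cons_add, Multiset.cons_inj_right] at h⟩
    · obtain ⟨v, rfl⟩ := Multiset.exists_cons_of_mem hu
      exact .inr ⟨v, rfl, by rwa [Multiset.add_cons, Multiset.cons_inj_right] at h⟩
  · rintro (⟨v, rfl, rfl⟩ | ⟨v, rfl, rfl⟩)
    · rw [Multiset.cons_add]
    · rw [Multiset.add_cons]

theorem le_assoc_of_assoc_le {α : Type*} [Preorder α] {op : α → α → α}
    (mono : ∀ {a b} (c : α), a ≤ b → op a c ≤ op b c) (comm : ∀ a b, op a b ≤ op b a)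
    (assoc : ∀ a b c, op (op a b) c ≤ op a (op b c)) (a b c : α) :
    op a (op b c) ≤ op (op a b) c :=
  calc
    op a (op b c) ≤ op (op b c) a := comm _ _
    _ ≤ op (op c b) a := mono a (comm _ _)
    _ ≤ op c (op b a) := assoc _ _ _
    _ ≤ op (op b a) c := comm _ _
    _ ≤ op (op a b) c := mono c (comm _ _)

section SequentCalculus

variable {A B C F : St} {Γ Δ : Multiset St}

theorem SeqProof.exchange (h : SeqProof (A ::ₘ B ::ₘ Γ)) : SeqProof (B ::ₘ A ::ₘ Γ) :=
  Multiset.cons_swap A B Γ ▸ h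

theorem SeqStep.seqProof (h : SeqStep Γ Δ) (hΓ : SeqProof Γ) : SeqProof Δ := by
  cases h with
  | mix hΔ => exact hΓ.mix hΔ
  | par => exact hΓ.par
  | copL hB => exact hΓ.cop hB
  | copR hA => exact hA.cop hΓ

theorem SeqStep.add_left (X : Multiset St) (h : SeqStep Γ Δ) : SeqStep (X + Γ) (X + Δ) := by
  cases h with
  | mix hΔ => exact add_assoc X Γ _ ▸ .mix hΔ
  | par => simpa only [Multiset.add_cons] using .par
  | copL hB => simpa only [Multiset.add_cons, ← add_assoc] using .copL hB
  | copR hA => simpa only [Multiset.add_cons, add_left_comm X] using .copR hA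

theorem SeqProof.exists_principal (h : SeqProof (F ::ₘ Γ)) :
    ∃ Δ, Principal F Δ ∧ ReflTransGen SeqStep Δ Γ := by
  generalize hS : F ::ₘ Γ = S at h
  induction h generalizing Γ with
  | nil => exact absurd hS Multiset.cons_ne_zero
  | unit =>
    obtain ⟨rfl, rfl⟩ := (Multiset.singleton_eq_cons_iff _).1 hS.symm
    exact ⟨_, .unit, .refl⟩
  | ax a =>
    rcases Multiset.cons_eq_cons.1 hS with ⟨rfl, rfl⟩ | ⟨-, Θ, rfl, hΘ⟩
    · exact ⟨_, .pos a, .refl⟩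
    · obtain ⟨rfl, rfl⟩ := (Multiset.singleton_eq_cons_iff _).1 hΘ
      exact ⟨_, .neg a, .refl⟩
  | mix h₁ h₂ ih₁ ih₂ =>
    rcases cons_eq_add_iff.1 hS with ⟨Θ, rfl, rfl⟩ | ⟨Θ, rfl, rfl⟩
    · obtain ⟨Δ, hΔ, hsteps⟩ := ih₁ rfl
      exact ⟨Δ, hΔ, hsteps.tail (.mix h₂)⟩
    · obtain ⟨Δ, hΔ, hsteps⟩ := ih₂ rfl
      exact ⟨Δ, hΔ, hsteps.tail (add_comm Θ _ ▸ .mix h₁)⟩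
  | @par A B _ h ih =>
    rcases Multiset.cons_eq_cons.1 hS with ⟨rfl, rfl⟩ | ⟨-, Θ, rfl, rfl⟩
    · exact ⟨_, .par h, .refl⟩
    · obtain ⟨Δ, hΔ, hsteps⟩ : ∃ Δ, Principal F Δ ∧ ReflTransGen SeqStep Δ (A ::ₘ B ::ₘ Θ) :=
        ih (by rw [Multiset.cons_swap F A, Multiset.cons_swap F B])
      exact ⟨Δ, hΔ, hsteps.tail .par⟩
  | cop h₁ h₂ ih₁ ih₂ =>
    rcases Multiset.cons_eq_cons.1 hS with ⟨rfl, rfl⟩ | ⟨-, Θ, rfl, hΘ⟩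
    · exact ⟨_, .cop h₁ h₂, .refl⟩
    rcases cons_eq_add_iff.1 hΘ.symm with ⟨Λ, rfl, rfl⟩ | ⟨Λ, rfl, rfl⟩
    · obtain ⟨Δ, hΔ, hsteps⟩ := ih₁ (Multiset.cons_swap _ _ _)
      exact ⟨Δ, hΔ, hsteps.tail (.copL h₂)⟩
    · obtain ⟨Δ, hΔ, hsteps⟩ := ih₂ (Multiset.cons_swap _ _ _)
      exact ⟨Δ, hΔ, hsteps.tail (.copR h₁)⟩

theorem SeqProof.replace (X : Multiset St) (h : SeqProof (F ::ₘ Γ))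
    (hX : ∀ Δ, Principal F Δ → SeqProof (X + Δ)) : SeqProof (X + Γ) := by
  obtain ⟨Δ, hΔ, hsteps⟩ := h.exists_principal
  clear h
  induction hsteps with
  | refl => exact hX Δ hΔ
  | tail _ hstep ih => exact (hstep.add_left X).seqProof ih

theorem SeqProof.of_unit (h : SeqProof (.unit ::ₘ Γ)) : SeqProof Γ := by
  simpa using h.replace 0 fun | _, .unit => by simpa using SeqProof.nil

theorem SeqProof.of_par (h : SeqProof (.par A B ::ₘ Γ)) : SeqProof (A ::ₘ B ::ₘ Γ) := by
  simpa using h.replace {A, B} fun | _, .par hAB => by simpa using hAB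

theorem SeqProof.replace_cop (X : Multiset St) (h : SeqProof (.cop A B ::ₘ Γ))
    (hX : ∀ Δ₁ Δ₂, SeqProof (A ::ₘ Δ₁) → SeqProof (B ::ₘ Δ₂) → SeqProof (X + (Δ₁ + Δ₂))) :
    SeqProof (X + Γ) :=
  h.replace X fun | _, .cop hA hB => hX _ _ hA hB

end SequentCalculus

section Order

variable {A A' B B' C P Q X : St}

/-- `A ≤ B` says that `B` may replace `A` in every derivable sequent. -/
instance : Preorder St where
  le A B := ∀ Γ, SeqProof (A ::ₘ Γ) → SeqProof (B ::ₘ Γ)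
  le_refl _ _ := id
  le_trans _ _ _ hAB hBC Γ h := hBC Γ (hAB Γ h)

theorem par_le_par (hA : A ≤ A') (hB : B ≤ B') : St.par A B ≤ .par A' B' := fun Γ h => by
  have hA'B : SeqProof (A' ::ₘ B ::ₘ Γ) := hA _ h.of_par
  have hB'A' : SeqProof (B' ::ₘ A' ::ₘ Γ) := hB _ hA'B.exchange
  exact hB'A'.exchange.par

theorem par_comm_le (A B : St) : St.par A B ≤ .par B A := fun _ h => h.of_par.exchange.par

theorem par_assoc_le (A B C : St) : St.par (.par A B) C ≤ .par A (.par B C) := fun Γ h => by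
  have hABC : SeqProof (A ::ₘ B ::ₘ C ::ₘ Γ) := h.of_par.of_par
  rw [Multiset.cons_swap A B, Multiset.cons_swap A C] at hABC
  exact hABC.par.exchange.par

theorem le_par_assoc (A B C : St) : St.par A (.par B C) ≤ .par (.par A B) C :=
  le_assoc_of_assoc_le (op := .par) (fun _ h => par_le_par h le_rfl) par_comm_le par_assoc_le A B C

theorem par_unit_le (A : St) : .par A .unit ≤ A := fun _ h => h.of_par.exchange.of_unit

theorem le_par_unit (A : St) : A ≤ .par A .unit := fun _ h => (SeqProof.unit.mix h).exchange.par

theorem cop_le (h : ∀ Γ Δ, SeqProof (A ::ₘ Γ) → SeqProof (B ::ₘ Δ) → SeqProof (X ::ₘ (Γ + Δ))) :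
    .cop A B ≤ X := fun _ hAB =>
  hAB.replace_cop {X} h

theorem cop_le_cop (hA : A ≤ A') (hB : B ≤ B') : St.cop A B ≤ .cop A' B' :=
  cop_le fun _ _ h₁ h₂ => (hA _ h₁).cop (hB _ h₂)

theorem cop_comm_le (A B : St) : St.cop A B ≤ .cop B A :=
  cop_le fun Γ Δ h₁ h₂ => add_comm Δ Γ ▸ h₂.cop h₁

theorem cop_assoc_le (A B C : St) : St.cop (.cop A B) C ≤ .cop A (.cop B C) :=
  cop_le fun Γ Δ hAB hC => by
    have h : SeqProof ((.cop A (.cop B C) ::ₘ Δ) + Γ) := hAB.replace_cop _ fun Γ₁ Γ₂ hA hB => by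
      simpa only [Multiset.cons_add, add_comm Δ, add_assoc] using hA.cop (hB.cop hC)
    rwa [Multiset.cons_add, add_comm] at h

theorem le_cop_assoc (A B C : St) : St.cop A (.cop B C) ≤ .cop (.cop A B) C :=
  le_assoc_of_assoc_le (op := .cop) (fun _ h => cop_le_cop h le_rfl) cop_comm_le cop_assoc_le A B C

theorem cop_unit_le (A : St) : .cop A .unit ≤ A :=
  cop_le fun Γ Δ hA hΔ => Multiset.cons_add A Γ Δ ▸ hA.mix hΔ.of_unit

theorem le_cop_unit (A : St) : A ≤ .cop A .unit := fun _ h => by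
  simpa using h.cop (Δ := 0) .unit

theorem antisymmRel_le_of_equiv (h : Equiv P Q) : AntisymmRel (· ≤ ·) P Q := by
  induction h with
  | refl P => exact ⟨le_rfl, le_rfl⟩
  | symm _ ih => exact ih.symm
  | trans _ _ ih₁ ih₂ => exact ih₁.trans ih₂
  | parComm P Q => exact ⟨par_comm_le P Q, par_comm_le Q P⟩
  | copComm P Q => exact ⟨cop_comm_le P Q, cop_comm_le Q P⟩
  | parAssoc P Q R => exact ⟨par_assoc_le P Q R, le_par_assoc P Q R⟩
  | copAssoc P Q R => exact ⟨cop_assoc_le P Q R, le_cop_assoc P Q R⟩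
  | parUnit P => exact ⟨par_unit_le P, le_par_unit P⟩
  | copUnit P => exact ⟨cop_unit_le P, le_cop_unit P⟩
  | parCongr _ _ ih₁ ih₂ => exact ⟨par_le_par ih₁.1 ih₂.1, par_le_par ih₁.2 ih₂.2⟩
  | copCongr _ _ ih₁ ih₂ => exact ⟨cop_le_cop ih₁.1 ih₂.1, cop_le_cop ih₁.2 ih₂.2⟩

theorem Ctx.fill_mono (C : Ctx) : Monotone C.fill := fun A B h => by
  induction C with
  | hole => exact h
  | parL C Q ih => exact par_le_par ih le_rfl
  | parR Q C ih => exact par_le_par le_rfl ih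
  | copL C Q ih => exact cop_le_cop ih le_rfl
  | copR Q C ih => exact cop_le_cop le_rfl ih

theorem unit_le_par_negS (hA : A.isAtom) : St.unit ≤ .par A A.negS := fun Γ h => by
  have hax : SeqProof (A ::ₘ {A.negS}) := by
    cases A with
    | pos a => exact .ax a
    | neg a => exact (SeqProof.ax a).exchange (Γ := 0)
    | _ => exact hA.elim
  exact .par (by simpa using hax.mix h.of_unit)

theorem switch_le (A B C : St) : St.cop A (.par B C) ≤ .par (.cop A B) C :=
  cop_le fun Γ Δ hA hBC => by
    have h : SeqProof (.cop A B ::ₘ (Γ + C ::ₘ Δ)) := hA.cop hBC.of_par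
    exact (Multiset.add_cons C Γ Δ ▸ h).par

theorem le_of_step (h : Step LBVRules P Q) : P ≤ Q := by
  obtain ⟨r, hr, C, P', Q', hroot, hP, hQ⟩ := h
  have hle : P' ≤ Q' := by
    cases hroot with
    | aiDown A hA => exact unit_le_par_negS hA
    | aiUp A hA => simp [LBVRules] at hr
    | s A B C => exact switch_le A B C
  exact (antisymmRel_le_of_equiv hP).1.trans <|
    (C.fill_mono hle).trans (antisymmRel_le_of_equiv hQ).1

theorem le_of_derivLBV (h : DerivLBV P Q) : P ≤ Q := by
  induction h with
  | eqv h => exact (antisymmRel_le_of_equiv h).1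
  | step h _ ih => exact (le_of_step h).trans ih

theorem seqProof_of_proofLBV (h : ProofLBV P) : SeqProof {P} :=
  le_of_derivLBV h 0 .unit

end Order

section Derivations

variable {P Q R : St} {Rs : Set Rule}

/-- The context obtained by putting `D` into the hole of `C`. -/
def Ctx.comp : Ctx → Ctx → Ctx
  | .hole, D => D
  | .parL C Q, D => .parL (C.comp D) Q
  | .parR Q C, D => .parR Q (C.comp D)
  | .copL C Q, D => .copL (C.comp D) Q
  | .copR Q C, D => .copR Q (C.comp D)

theorem Ctx.fill_comp (C D : Ctx) (P : St) : (C.comp D).fill P = C.fill (D.fill P) := by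
  induction C <;> simp [Ctx.comp, Ctx.fill, *]

theorem Ctx.fill_equiv (C : Ctx) (h : Equiv P Q) : Equiv (C.fill P) (C.fill Q) := by
  induction C with
  | hole => exact h
  | parL C X ih => exact .parCongr ih (.refl X)
  | parR X C ih => exact .parCongr (.refl X) ih
  | copL C X ih => exact .copCongr ih (.refl X)
  | copR X C ih => exact .copCongr (.refl X) ih

theorem Step.of_equiv_of_step (h : Equiv P Q) : Step Rs Q R → Step Rs P R
  | ⟨r, hr, C, P', Q', hroot, hP, hQ⟩ => ⟨r, hr, C, P', Q', hroot, h.trans hP, hQ⟩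

theorem Step.fill (C : Ctx) : Step Rs P Q → Step Rs (C.fill P) (C.fill Q)
  | ⟨r, hr, D, P', Q', hroot, hP, hQ⟩ =>
    ⟨r, hr, C.comp D, P', Q', hroot, C.fill_comp D P' ▸ C.fill_equiv hP,
      C.fill_comp D Q' ▸ C.fill_equiv hQ⟩

theorem Deriv.fill (C : Ctx) (h : Deriv (Step Rs) P Q) :
    Deriv (Step Rs) (C.fill P) (C.fill Q) := by
  induction h with
  | eqv h => exact .eqv (C.fill_equiv h)
  | step hstep _ ih => exact .step (hstep.fill C) ih

theorem Deriv.of_equiv_of_deriv (h : Equiv P Q) : Deriv (Step Rs) Q R → Deriv (Step Rs) P R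
  | .eqv h' => .eqv (h.trans h')
  | .step hstep h' => .step (.of_equiv_of_step h hstep) h'

theorem Deriv.trans (h : Deriv (Step Rs) P Q) (h' : Deriv (Step Rs) Q R) :
    Deriv (Step Rs) P R := by
  induction h with
  | eqv h => exact .of_equiv_of_deriv h h'
  | step hstep _ ih => exact .step hstep (ih h')

theorem RootStep.deriv {r : Rule} (h : RootStep r P Q) (hr : r ∈ Rs) : Deriv (Step Rs) P Q :=
  .step ⟨r, hr, .hole, P, Q, h, .refl P, .refl Q⟩ (.eqv (.refl Q))

instance : Trans Equiv Equiv Equiv := ⟨.trans⟩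

instance : Trans DerivLBV DerivLBV DerivLBV := ⟨.trans⟩

instance : Trans Equiv DerivLBV DerivLBV := ⟨.of_equiv_of_deriv⟩

instance : Trans DerivLBV Equiv DerivLBV := ⟨fun h h' => h.trans (.eqv h')⟩

end Derivations

section BigPar

/-- The par of the members of a sequent, `◦` for the empty one. The order in which they are listed
is an arbitrary choice, irrelevant up to the structural equivalence. -/
noncomputable def bigPar (Γ : Multiset St) : St := Γ.toList.foldr .par .unit

theorem foldr_par_equiv_of_perm {l l' : List St} (h : l.Perm l') (P : St) :
    Equiv (l.foldr .par P) (l'.foldr .par P) := by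
  induction h with
  | nil => exact .refl P
  | cons A _ ih => exact .parCongr (.refl A) ih
  | swap A B l =>
    calc
      Equiv (.par B (.par A (l.foldr .par P))) (.par (.par B A) (l.foldr .par P)) :=
        (Equiv.parAssoc _ _ _).symm
      Equiv _ (.par (.par A B) (l.foldr .par P)) := .parCongr (.parComm B A) (.refl _)
      Equiv _ (.par A (.par B (l.foldr .par P))) := .parAssoc _ _ _
  | trans _ _ ih₁ ih₂ => exact ih₁.trans ih₂

theorem bigPar_zero : bigPar 0 = .unit := by simp [bigPar]

theorem bigPar_cons (A : St) (Γ : Multiset St) : Equiv (bigPar (A ::ₘ Γ)) (.par A (bigPar Γ)) := by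
  have hperm : (A ::ₘ Γ).toList.Perm (A :: Γ.toList) := by
    rw [← Multiset.coe_eq_coe, ← Multiset.cons_coe, Multiset.coe_toList, Multiset.coe_toList]
  exact foldr_par_equiv_of_perm hperm .unit

theorem bigPar_singleton (A : St) : Equiv (bigPar {A}) A :=
  calc
    Equiv (bigPar {A}) (.par A (bigPar 0)) := bigPar_cons A 0
    Equiv _ A := bigPar_zero ▸ .parUnit A

theorem bigPar_add (Γ Δ : Multiset St) :
    Equiv (bigPar (Γ + Δ)) (.par (bigPar Γ) (bigPar Δ)) := by
  induction Γ using Multiset.induction_on with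
  | empty =>
    rw [zero_add, bigPar_zero]
    exact (Equiv.parUnit _).symm.trans (.parComm _ _)
  | cons A Γ ih =>
    rw [Multiset.cons_add]
    calc
      Equiv (bigPar (A ::ₘ (Γ + Δ))) (.par A (bigPar (Γ + Δ))) := bigPar_cons A _
      Equiv _ (.par A (.par (bigPar Γ) (bigPar Δ))) := .parCongr (.refl A) ih
      Equiv _ (.par (.par A (bigPar Γ)) (bigPar Δ)) := (Equiv.parAssoc _ _ _).symm
      Equiv _ (.par (bigPar (A ::ₘ Γ)) (bigPar Δ)) := .parCongr (bigPar_cons A Γ).symm (.refl _)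

end BigPar

section Interpretation

variable {A B : St} {Γ Δ : Multiset St}

theorem derivLBV_mix (hΔ : ProofLBV (bigPar Δ)) : DerivLBV (bigPar Γ) (bigPar (Γ + Δ)) :=
  calc
    Equiv (bigPar Γ) (.par (bigPar Γ) .unit) := (Equiv.parUnit _).symm
    DerivLBV _ (.par (bigPar Γ) (bigPar Δ)) := hΔ.fill (.parR (bigPar Γ) .hole)
    Equiv _ (bigPar (Γ + Δ)) := (bigPar_add Γ Δ).symm

theorem bigPar_par (A B : St) (Γ : Multiset St) :
    Equiv (bigPar (A ::ₘ B ::ₘ Γ)) (bigPar (.par A B ::ₘ Γ)) :=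
  calc
    Equiv (bigPar (A ::ₘ B ::ₘ Γ)) (.par A (bigPar (B ::ₘ Γ))) := bigPar_cons A _
    Equiv _ (.par A (.par B (bigPar Γ))) := .parCongr (.refl A) (bigPar_cons B Γ)
    Equiv _ (.par (.par A B) (bigPar Γ)) := (Equiv.parAssoc _ _ _).symm
    Equiv _ (bigPar (.par A B ::ₘ Γ)) := (bigPar_cons _ Γ).symm

theorem derivLBV_copL (hB : ProofLBV (bigPar (B ::ₘ Δ))) :
    DerivLBV (bigPar (A ::ₘ Γ)) (bigPar (.cop A B ::ₘ (Γ + Δ))) :=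
  have hB' : ProofLBV (.par B (bigPar Δ)) := hB.trans (.eqv (bigPar_cons B Δ))
  have hswitch : DerivLBV (.cop A (.par B (bigPar Δ))) (.par (.cop A B) (bigPar Δ)) :=
    (RootStep.s A B (bigPar Δ)).deriv (by simp [LBVRules])
  calc
    Equiv (bigPar (A ::ₘ Γ)) (.par A (bigPar Γ)) := bigPar_cons A Γ
    Equiv _ (.par (.cop A .unit) (bigPar Γ)) := .parCongr (Equiv.copUnit A).symm (.refl _)
    DerivLBV _ (.par (.cop A (.par B (bigPar Δ))) (bigPar Γ)) :=
      hB'.fill (.parL (.copR A .hole) (bigPar Γ))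
    DerivLBV _ (.par (.par (.cop A B) (bigPar Δ)) (bigPar Γ)) := hswitch.fill (.parL .hole _)
    Equiv _ (.par (.cop A B) (.par (bigPar Δ) (bigPar Γ))) := .parAssoc _ _ _
    Equiv _ (.par (.cop A B) (bigPar (Δ + Γ))) := .parCongr (.refl _) (bigPar_add Δ Γ).symm
    Equiv _ (bigPar (.cop A B ::ₘ (Γ + Δ))) := add_comm Δ Γ ▸ (bigPar_cons _ _).symm

theorem derivLBV_copR (hA : ProofLBV (bigPar (A ::ₘ Γ))) :
    DerivLBV (bigPar (B ::ₘ Δ)) (bigPar (.cop A B ::ₘ (Γ + Δ))) :=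
  calc
    DerivLBV (bigPar (B ::ₘ Δ)) (bigPar (.cop B A ::ₘ (Δ + Γ))) := derivLBV_copL hA
    Equiv _ (.par (.cop B A) (bigPar (Δ + Γ))) := bigPar_cons _ _
    Equiv _ (.par (.cop A B) (bigPar (Δ + Γ))) := .parCongr (.copComm B A) (.refl _)
    Equiv _ (bigPar (.cop A B ::ₘ (Γ + Δ))) := add_comm Δ Γ ▸ (bigPar_cons _ _).symm

theorem proofLBV_of_seqProof (h : SeqProof Γ) : ProofLBV (bigPar Γ) := by
  induction h with
  | nil => exact .eqv (bigPar_zero ▸ .refl _)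
  | unit => exact .eqv (bigPar_singleton .unit).symm
  | ax a =>
    calc
      DerivLBV .unit (.par (.pos a) (.neg a)) :=
        (RootStep.aiDown (.pos a) trivial).deriv (by simp [LBVRules])
      Equiv _ (.par (.pos a) (bigPar {.neg a})) :=
        .parCongr (.refl _) (bigPar_singleton _).symm
      Equiv _ (bigPar {.pos a, .neg a}) := (bigPar_cons _ _).symm
  | mix _ _ ih₁ ih₂ => exact ih₁.trans (derivLBV_mix ih₂)
  | par _ ih => exact ih.trans (.eqv (bigPar_par _ _ _))
  | cop _ _ ih₁ ih₂ => exact ih₁.trans (derivLBV_copL ih₂)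

theorem proofLBV_par_bigPar (h : SeqProof (A ::ₘ Γ)) : ProofLBV (.par A (bigPar Γ)) :=
  (proofLBV_of_seqProof h).trans (.eqv (bigPar_cons A Γ))

theorem SeqStep.derivLBV (h : SeqStep Γ Δ) : DerivLBV (bigPar Γ) (bigPar Δ) := by
  cases h with
  | mix h => exact derivLBV_mix (proofLBV_of_seqProof h)
  | par => exact .eqv (bigPar_par _ _ _)
  | copL hB => exact derivLBV_copL (proofLBV_of_seqProof hB)
  | copR hA => exact derivLBV_copR (proofLBV_of_seqProof hA)

theorem derivLBV_of_seqSteps (h : ReflTransGen SeqStep Γ Δ) :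
    DerivLBV (bigPar Γ) (bigPar Δ) := by
  induction h with
  | refl => exact .eqv (.refl _)
  | tail _ hstep ih => exact ih.trans hstep.derivLBV

end Interpretation

/-- Shallow splitting for LBV.
If `[(R,T),P]` is provable in LBV, then there exist structures `P₁`, `P₂`
such that there is a derivation in LBV from `[P₁,P₂]` to `P`, and both
`[R,P₁]` and `[T,P₂]` are provable in LBV. -/
theorem shallow_splitting (R T P : St)
    (h : ProofLBV (.par (.cop R T) P)) :
    ∃ P₁ P₂ : St,
      DerivLBV (.par P₁ P₂) P ∧
      ProofLBV (.par R P₁) ∧ ProofLBV (.par T P₂) := by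
  have hs : SeqProof (St.cop R T ::ₘ {P}) := SeqProof.of_par (Γ := 0) (seqProof_of_proofLBV h)
  obtain ⟨_, hprincipal, hsteps⟩ := hs.exists_principal
  cases hprincipal with
  | @cop _ _ Γ Δ hR hT =>
    refine ⟨bigPar Γ, bigPar Δ, ?_, proofLBV_par_bigPar hR, proofLBV_par_bigPar hT⟩
    calc
      Equiv (.par (bigPar Γ) (bigPar Δ)) (bigPar (Γ + Δ)) := (bigPar_add Γ Δ).symm
      DerivLBV _ (bigPar {P}) := derivLBV_of_seqSteps hsteps
      Equiv _ P := bigPar_singleton P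

end LBV
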